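/- Suppose λ₊ and λ₋ are real. Then for all 0 ≤ m, n ≤ p−1 the following pseudo-unitarity identity holds in A: (d_{0m})*·d_{0n} + Σ_{k=1}^{p−1} (d_{km})*·d_{p−k,n} = (δ_{m+n,0} + δ_{m+n,p})·1_A, where δ_{i,j} is the Kronecker delta. In particular (d_{00})*·d_{00} + Σ_{k=1}^{p−1} (d_{k0})*·d_{p−k,0} = 1_A. -/

import Mathlib

open scoped TensorProduct

noncomputable section

/-- `q = exp(2πi/p)`, a primitive `p`-th root of unity. -/
def q (p : ℕ) : ℂ := Complex.exp (2 * Real.pi * Complex.I / p)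

/-- `q^{1/2} = exp(iπ/p)`. -/
def qh (p : ℕ) : ℂ := Complex.exp (Real.pi * Complex.I / p)

/-- The balanced q-number `[k] = (q^k - q^{-k})/(q - q^{-1})`. -/
def qnum (p k : ℕ) : ℂ := (q p ^ k - (q p)⁻¹ ^ k) / (q p - (q p)⁻¹)

/-- The balanced q-factorial `[k]! = [1][2]⋯[k]`, with `[0]! = 1`. -/
def qfact (p k : ℕ) : ℂ := ∏ j ∈ Finset.range k, qnum p (j + 1)

/-- Generators `η₊, η₋, δ` of the coordinate algebra of `E(1,1|p)`. -/
inductive Gen : Type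
  | ep : Gen
  | em : Gen
  | d : Gen

open FreeAlgebra in
/-- The defining relations of `A(E(1,1|p))`: the two-sided ideal generated by
`η₋η₊ − q²η₊η₋`, `η₊δ − q²δη₊`, `η₋δ − q²δη₋`, `δ^p − 1`, `η₊^p`, `η₋^p`. -/
inductive ERel (p : ℕ) : FreeAlgebra ℂ Gen → FreeAlgebra ℂ Gen → Prop
  | commEta : ERel p (ι ℂ Gen.em * ι ℂ Gen.ep) ((q p ^ 2) • (ι ℂ Gen.ep * ι ℂ Gen.em))
  | commEpD : ERel p (ι ℂ Gen.ep * ι ℂ Gen.d) ((q p ^ 2) • (ι ℂ Gen.d * ι ℂ Gen.ep))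
  | commEmD : ERel p (ι ℂ Gen.em * ι ℂ Gen.d) ((q p ^ 2) • (ι ℂ Gen.d * ι ℂ Gen.em))
  | deltaPow : ERel p (ι ℂ Gen.d ^ p) 1
  | epPow : ERel p (ι ℂ Gen.ep ^ p) 0
  | emPow : ERel p (ι ℂ Gen.em ^ p) 0

/-- The coordinate algebra `A = A(E(1,1|p))` of the reduced quantum Poincaré group. -/
abbrev A (p : ℕ) : Type := RingQuot (ERel p)

/-- `η₊ ∈ A`. -/
def ηp (p : ℕ) : A p := RingQuot.mkAlgHom ℂ (ERel p) (FreeAlgebra.ι ℂ Gen.ep)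

/-- `η₋ ∈ A`. -/
def ηm (p : ℕ) : A p := RingQuot.mkAlgHom ℂ (ERel p) (FreeAlgebra.ι ℂ Gen.em)

/-- `δ ∈ A`. -/
def dl (p : ℕ) : A p := RingQuot.mkAlgHom ℂ (ERel p) (FreeAlgebra.ι ℂ Gen.d)

/-- `ξ = q·η₊η₋ ∈ A`. -/
def xi (p : ℕ) : A p := q p • (ηp p * ηm p)

/-- The matrix elements `d_{mn}(λ)` of the pseudo-unitary irreducible representation `T^λ`
of `E_q(1,1)` (with the central scalar factor `exp(−iλ₊^p z₊ − iλ₋^p z₋)` removed). -/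
def dmat (p : ℕ) (lp lm : ℂ) (m n : ℕ) : A p :=
  if m < n then
    (∑ k ∈ Finset.range (p - n + m),
        ((-(lp * lm)) ^ k * (q p)⁻¹ ^ (k * (m + n)) /
          (qfact p k * qfact p (k + n - m))) • xi p ^ k) *
      ((-Complex.I * qh p * (q p)⁻¹ ^ n * lm) • ηm p) ^ (n - m) * dl p ^ n +
    ((-Complex.I * (qh p)⁻¹ * (q p)⁻¹ ^ n * lp) • ηp p) ^ (p + m - n) * dl p ^ n *
      (∑ k ∈ Finset.range (n - m),
        ((-(lp * lm)) ^ k * q p ^ (k * (m + n)) /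
          (qfact p k * qfact p (k + p + m - n))) • xi p ^ k)
  else if n < m then
    (∑ k ∈ Finset.range (m - n),
        ((-(lp * lm)) ^ k * (q p)⁻¹ ^ (k * (m + n)) /
          (qfact p k * qfact p (k + p + n - m))) • xi p ^ k) *
      ((-Complex.I * qh p * (q p)⁻¹ ^ n * lm) • ηm p) ^ (p + n - m) * dl p ^ n +
    ((-Complex.I * (qh p)⁻¹ * (q p)⁻¹ ^ n * lp) • ηp p) ^ (m - n) * dl p ^ n *
      (∑ k ∈ Finset.range (p - m + n),
        ((-(lp * lm)) ^ k * q p ^ (k * (m + n)) /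
          (qfact p k * qfact p (k + m - n))) • xi p ^ k)
  else
    (∑ k ∈ Finset.range p,
        ((-(lp * lm)) ^ k * (q p)⁻¹ ^ (2 * k * n) / qfact p k ^ 2) • xi p ^ k) *
      dl p ^ n

lemma qnum_add (p i j : ℕ) : qnum p (i + j) = (q p)⁻¹ ^ j * qnum p i + q p ^ i * qnum p j := by
  simp only [qnum, pow_add]
  ring

lemma qnum_add' (p i j : ℕ) :
    qnum p (i + j) = q p ^ j * qnum p i + (q p)⁻¹ ^ i * qnum p j := by
  rw [add_comm, qnum_add]
  ring

lemma q_ne_zero (p : ℕ) : q p ≠ 0 := Complex.exp_ne_zero _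

lemma qh_ne_zero (p : ℕ) : qh p ≠ 0 := Complex.exp_ne_zero _

lemma qh_sq (p : ℕ) : qh p ^ 2 = q p := by
  rw [qh, q, ← Complex.exp_nat_mul]
  congr 1
  push_cast
  ring

lemma isPrimitiveRoot_q (p : ℕ) [NeZero p] : IsPrimitiveRoot (q p) p :=
  Complex.isPrimitiveRoot_exp p (NeZero.ne p)

lemma conj_q (p : ℕ) : (starRingEnd ℂ) (q p) = (q p)⁻¹ := by
  rw [q, ← Complex.exp_conj, ← Complex.exp_neg]
  simp [neg_div, map_ofNat]

lemma conj_qh (p : ℕ) : (starRingEnd ℂ) (qh p) = (qh p)⁻¹ := by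
  rw [qh, ← Complex.exp_conj, ← Complex.exp_neg]
  simp [neg_div]

lemma conj_qnum (p k : ℕ) : (starRingEnd ℂ) (qnum p k) = qnum p k := by
  simp only [qnum, map_div₀, map_sub, map_pow, map_inv₀, conj_q, inv_inv]
  rw [← neg_sub (q p ^ k), ← neg_sub (q p), neg_div_neg_eq]

lemma conj_qfact (p k : ℕ) : (starRingEnd ℂ) (qfact p k) = qfact p k := by
  simp [qfact, conj_qnum]

lemma qnum_zero (p : ℕ) : qnum p 0 = 0 := by simp [qnum]

lemma qfact_zero (p : ℕ) : qfact p 0 = 1 := by simp [qfact]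

lemma qfact_succ (p k : ℕ) : qfact p (k + 1) = qnum p (k + 1) * qfact p k := by
  rw [qfact, Finset.prod_range_succ, mul_comm, qfact]

lemma qnum_ne_zero {p k : ℕ} (hp : Odd p) (hk : 0 < k) (hkp : k < p) : qnum p k ≠ 0 := by
  have key : ∀ j, 0 < j → j < p → q p ^ j - (q p)⁻¹ ^ j ≠ 0 := by
    intro j hj hjp h
    have : NeZero p := ⟨by omega⟩
    have hq := q_ne_zero p
    have h2 : q p ^ (2 * j) = 1 := by
      rw [two_mul, pow_add]
      nth_rewrite 1 [sub_eq_zero.mp h]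
      rw [← mul_pow, inv_mul_cancel₀ hq, one_pow]
    have h3 := (isPrimitiveRoot_q p).dvd_of_pow_eq_one _ h2
    have h4 := (Nat.Coprime.dvd_mul_left (Nat.coprime_two_right.mpr hp)).mp h3
    exact absurd (Nat.le_of_dvd hj h4) (by omega)
  exact div_ne_zero (key k hk hkp) (by simpa using key 1 one_pos (by omega))

/-- Vanishing of the alternating sum of Gaussian binomial coefficients, up to a common factor. -/
lemma sum_antidiagonal_qfact {p : ℕ} (hp : Odd p) {u : ℂ} (hu : u ≠ 0)
    (hadd : ∀ i j, qnum p (i + j) = u⁻¹ ^ j * qnum p i + u ^ i * qnum p j) (N : ℕ)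
    (hN : N + 1 < p) :
    ∑ x ∈ Finset.HasAntidiagonal.antidiagonal (N + 1),
      (-1) ^ x.2 * u ^ (x.2 * (N + 1)) * u⁻¹ ^ x.2 / (qfact p x.1 * qfact p x.2) = 0 := by
  set S : ℕ → ℂ := fun M => ∑ x ∈ Finset.HasAntidiagonal.antidiagonal M,
      (-1) ^ x.2 * u ^ (x.2 * M) * u⁻¹ ^ x.2 / (qfact p x.1 * qfact p x.2) with hS
  have step : ∀ M, M + 1 < p → qnum p (M + 1) * S (M + 1) = (1 - u ^ (2 * M)) * S M := by
    intro M hM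
    have e : qnum p (M + 1) * S (M + 1) =
        ∑ x ∈ Finset.HasAntidiagonal.antidiagonal (M + 1), (-1) ^ x.2 * u ^ (x.2 * M) * u⁻¹ ^ x.2 *
          (qnum p x.1 / (qfact p x.1 * qfact p x.2)) +
        ∑ x ∈ Finset.HasAntidiagonal.antidiagonal (M + 1), (-1) ^ x.2 * u ^ (x.2 * M) * u ^ x.1 *
          (qnum p x.2 / (qfact p x.1 * qfact p x.2)) := by
      rw [hS, Finset.mul_sum, ← Finset.sum_add_distrib]
      refine Finset.sum_congr rfl fun x hx => ?_
      have h : x.1 + x.2 = M + 1 := Finset.HasAntidiagonal.mem_antidiagonal.mp hx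
      rw [← h, hadd, h, mul_add, mul_one, pow_add]
      have : u⁻¹ ^ x.2 = (u ^ x.2)⁻¹ := inv_pow _ _
      rw [this]
      field_simp
    rw [e, Finset.Nat.sum_antidiagonal_succ, Finset.Nat.sum_antidiagonal_succ']
    simp only [qnum_zero, zero_div, mul_zero, zero_add]
    rw [hS, sub_mul, one_mul, Finset.mul_sum, sub_eq_add_neg, ← Finset.sum_neg_distrib]
    refine congrArg₂ _ (Finset.sum_congr rfl fun x hx => ?_) (Finset.sum_congr rfl fun x hx => ?_)
    all_goals
      have h : x.1 + x.2 = M := Finset.HasAntidiagonal.mem_antidiagonal.mp hx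
      rw [qfact_succ]
    · have := qnum_ne_zero hp (Nat.succ_pos x.1) (by omega)
      field_simp
    · have := qnum_ne_zero hp (Nat.succ_pos x.2) (by omega)
      rw [← h, inv_pow]
      field_simp
      ring
  have : S (N + 1) = 0 := by
    induction N with
    | zero =>
      have := step 0 hN
      simpa [qnum_ne_zero hp one_pos hN] using this
    | succ N ih =>
      have h := step (N + 1) hN
      rw [ih (by omega), mul_zero] at h
      exact (mul_eq_zero.mp h).resolve_left (qnum_ne_zero hp (by omega) hN)
  exact this

lemma sum_range_eq_sum_zmod {p : ℕ} [NeZero p] {M : Type*} [AddCommMonoid M] (f : ℕ → M) :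
    ∑ i ∈ Finset.range p, f i = ∑ x : ZMod p, f x.val := by
  refine Finset.sum_nbij' (fun i => (i : ZMod p)) ZMod.val ?_ ?_ ?_ ?_ ?_
  · simp
  · intro x _
    simpa using x.val_lt
  · intro i hi
    exact ZMod.val_cast_of_lt (Finset.mem_range.mp hi)
  · intro x _
    exact ZMod.natCast_zmod_val x
  · intro i hi
    rw [ZMod.val_cast_of_lt (Finset.mem_range.mp hi)]

lemma sum_zmod_smul_pow {p : ℕ} [NeZero p] {R : Type*} [Ring R] [Algebra ℂ R] {x : R}
    (hx : x ^ p = 0) (N : ZMod p) (f : ℕ → ℕ → ℂ) :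
    ∑ j : ZMod p, f (N - j).val j.val • x ^ ((N - j).val + j.val) =
      (∑ y ∈ Finset.HasAntidiagonal.antidiagonal N.val, f y.1 y.2) • x ^ N.val := by
  have key : ∀ j : ZMod p, f (N - j).val j.val • x ^ ((N - j).val + j.val) =
      if j.val < N.val + 1 then f (N.val - j.val) j.val • x ^ N.val else 0 := by
    intro j
    split_ifs with h
    · have hj : j.val ≤ N.val := by omega
      rw [ZMod.val_sub hj, Nat.sub_add_cancel hj]
    · have : p ≤ (N - j).val + j.val := by
        by_contra! hlt
        have := ZMod.val_add_of_lt hlt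
        rw [sub_add_cancel] at this
        omega
      rw [pow_eq_zero_of_le this hx, smul_zero]
  rw [Finset.sum_congr rfl fun j _ => key j,
    ← sum_range_eq_sum_zmod fun i => if i < N.val + 1 then f (N.val - i) i • x ^ N.val else 0,
    ← Finset.sum_filter, Finset.sum_smul, Finset.Nat.sum_antidiagonal_eq_sum_range_succ_mk,
    ← Finset.sum_range_reflect]
  have hN := N.val_lt
  have hr : (Finset.range p).filter (fun i => i < N.val + 1) = Finset.range (N.val + 1) := by
    ext i
    simp only [Finset.mem_filter, Finset.mem_range]
    omega
  rw [hr]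
  refine Finset.sum_congr rfl fun i hi => ?_
  have := Finset.mem_range.mp hi
  congr 2
  omega

/-- The product of two truncated `q`-exponentials with opposite arguments is `1`. -/
lemma sum_zmod_qexp {p : ℕ} [NeZero p] (hp : Odd p) {R : Type*} [Ring R] [Algebra ℂ R] {x : R}
    (hx : x ^ p = 0) {u : ℂ} (hu : u ≠ 0)
    (hadd : ∀ i j, qnum p (i + j) = u⁻¹ ^ j * qnum p i + u ^ i * qnum p j)
    {κ κ' : ℂ} (hκ : κ' = -(κ * u)) (N : ZMod p) :
    ∑ j : ZMod p, (κ' ^ (N - j).val / qfact p (N - j).val * (κ ^ j.val / qfact p j.val) *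
      u ^ (j.val * N.val)) • x ^ ((N - j).val + j.val) = if N = 0 then 1 else 0 := by
  rw [sum_zmod_smul_pow hx N fun i j =>
    κ' ^ i / qfact p i * (κ ^ j / qfact p j) * u ^ (j * N.val)]
  split_ifs with h
  · simp [h, qfact_zero]
  · obtain ⟨M, hM⟩ : ∃ M, N.val = M + 1 := Nat.exists_eq_succ_of_ne_zero ((ZMod.val_ne_zero N).mpr h)
    have hlt := N.val_lt
    rw [hM] at hlt ⊢
    have hκ2 : κ = κ' * (-1 * u⁻¹) := by
      rw [hκ]
      field_simp
    have e := congrArg (κ' ^ (M + 1) * ·) (sum_antidiagonal_qfact hp hu hadd M hlt)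
    simp only [mul_zero, Finset.mul_sum] at e
    rw [← zero_smul ℂ (x ^ (M + 1)), ← e]
    congr 1
    refine Finset.sum_congr rfl fun y hy => ?_
    have h : y.1 + y.2 = M + 1 := Finset.HasAntidiagonal.mem_antidiagonal.mp hy
    have h2 : κ ^ y.2 = κ' ^ y.2 * ((-1) ^ y.2 * u⁻¹ ^ y.2) := by
      rw [hκ2, mul_pow, mul_pow]
    rw [h2, ← h, pow_add]
    ring

lemma pow_mul_pow_of_mul_eq_smul {R : Type*} [Ring R] [Algebra ℂ R] {a b : R} {c : ℂ}
    (h : b * a = c • (a * b)) (n m : ℕ) : b ^ n * a ^ m = c ^ (n * m) • (a ^ m * b ^ n) := by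
  have h1 : ∀ n, b ^ n * a = c ^ n • (a * b ^ n) := by
    intro n
    induction n with
    | zero => simp
    | succ n ih =>
      rw [pow_succ, mul_assoc, h, mul_smul_comm, ← mul_assoc, ih, smul_mul_assoc, smul_smul,
        mul_assoc, pow_succ']
  induction m with
  | zero => simp
  | succ m ih =>
    rw [pow_succ, ← mul_assoc, ih, smul_mul_assoc, mul_assoc, h1, mul_smul_comm, smul_smul,
      ← mul_assoc, mul_add, mul_one, pow_add]

lemma ηm_mul_ηp (p : ℕ) : ηm p * ηp p = (q p ^ 2) • (ηp p * ηm p) := by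
  simpa [ηm, ηp] using RingQuot.mkAlgHom_rel ℂ (ERel.commEta (p := p))

lemma dl_mul_ηp (p : ℕ) : dl p * ηp p = ((q p)⁻¹ ^ 2) • (ηp p * dl p) := by
  have h : ηp p * dl p = (q p ^ 2) • (dl p * ηp p) := by
    simpa [dl, ηp] using RingQuot.mkAlgHom_rel ℂ (ERel.commEpD (p := p))
  rw [h, smul_smul, ← mul_pow, inv_mul_cancel₀ (q_ne_zero p), one_pow, one_smul]

lemma dl_mul_ηm (p : ℕ) : dl p * ηm p = ((q p)⁻¹ ^ 2) • (ηm p * dl p) := by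
  have h : ηm p * dl p = (q p ^ 2) • (dl p * ηm p) := by
    simpa [dl, ηm] using RingQuot.mkAlgHom_rel ℂ (ERel.commEmD (p := p))
  rw [h, smul_smul, ← mul_pow, inv_mul_cancel₀ (q_ne_zero p), one_pow, one_smul]

lemma dl_pow (p : ℕ) : dl p ^ p = 1 := by
  simpa [dl] using RingQuot.mkAlgHom_rel ℂ (ERel.deltaPow (p := p))

lemma ηp_pow (p : ℕ) : ηp p ^ p = 0 := by
  simpa [ηp] using RingQuot.mkAlgHom_rel ℂ (ERel.epPow (p := p))

lemma ηm_pow (p : ℕ) : ηm p ^ p = 0 := by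
  simpa [ηm] using RingQuot.mkAlgHom_rel ℂ (ERel.emPow (p := p))

lemma xi_pow (p k : ℕ) : xi p ^ k = (q p ^ (k ^ 2)) • (ηp p ^ k * ηm p ^ k) := by
  induction k with
  | zero => simp
  | succ k ih =>
    have h := pow_mul_pow_of_mul_eq_smul (ηm_mul_ηp p) k 1
    rw [pow_one] at h
    rw [pow_succ, ih, xi, mul_smul_comm, smul_mul_assoc, smul_smul, ← mul_assoc, mul_assoc _ _ (ηp p),
      h, mul_smul_comm, smul_mul_assoc, smul_smul, ← mul_assoc, ← pow_succ,
      mul_assoc (ηp p ^ (k + 1)), ← pow_succ]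
    congr 1
    ring

lemma dl_pow_mul_xi_pow (p n k : ℕ) :
    dl p ^ n * xi p ^ k = ((q p)⁻¹ ^ (4 * n * k)) • (xi p ^ k * dl p ^ n) := by
  have h : dl p * xi p = ((q p)⁻¹ ^ 4) • (xi p * dl p) := by
    rw [xi, mul_smul_comm, ← mul_assoc, dl_mul_ηp, smul_mul_assoc, mul_assoc, dl_mul_ηm,
      mul_smul_comm, smul_mul_assoc, ← mul_assoc]
    simp only [smul_smul]
    congr 1
    ring
  rw [pow_mul_pow_of_mul_eq_smul h, ← pow_mul, mul_assoc]

/-- The monomial `η₊^a η₋^b δ^n` with its coefficient in `d_{mn}`, where `b - a ≡ n - m` mod `p`. -/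
def dterm (p : ℕ) (κp κm : ℂ) (n a b : ℕ) : A p :=
  (κp ^ a * κm ^ b * (q p)⁻¹ ^ (n * (a + b)) * q p ^ (a * b) / (qfact p a * qfact p b)) •
    (ηp p ^ a * ηm p ^ b * dl p ^ n)

lemma dmat_eq_of_shift {p m n r : ℕ} (lp lm : ℂ) (hm : m < p) (hn : n < p) (hr : r < p)
    (hmr : m + r = n ∨ m + r = n + p) :
    dmat p lp lm m n =
      (∑ k ∈ Finset.range (p - r), ((-(lp * lm)) ^ k * (q p)⁻¹ ^ (k * (m + n)) /
          (qfact p k * qfact p (k + r))) • xi p ^ k) *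
        ((-Complex.I * qh p * (q p)⁻¹ ^ n * lm) • ηm p) ^ r * dl p ^ n +
      ((-Complex.I * (qh p)⁻¹ * (q p)⁻¹ ^ n * lp) • ηp p) ^ (p - r) * dl p ^ n *
        (∑ k ∈ Finset.range r, ((-(lp * lm)) ^ k * q p ^ (k * (m + n)) /
          (qfact p k * qfact p (k + (p - r)))) • xi p ^ k) := by
  unfold dmat
  split_ifs with h1 h2
  · obtain rfl : r = n - m := by omega
    rw [show p - n + m = p - (n - m) by omega, show p + m - n = p - (n - m) by omega]
    refine congrArg₂ _ (congrArg (· * _ * _) (Finset.sum_congr rfl fun k _ => ?_))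
      (congrArg _ (Finset.sum_congr rfl fun k _ => ?_))
    · rw [show k + n - m = k + (n - m) by omega]
    · rw [show k + p + m - n = k + (p - (n - m)) by omega]
  · obtain rfl : r = p + n - m := by omega
    rw [show p - m + n = p + n - m by omega, show m - n = p - (p + n - m) by omega]
    refine congrArg₂ _ (congrArg (· * _ * _) (Finset.sum_congr rfl fun k _ => ?_))
      (congrArg _ (Finset.sum_congr rfl fun k _ => ?_))
    · rw [show k + p + n - m = k + (p + n - m) by omega]
    · rw [show k + m - n = k + (p - (p + n - m)) by omega]
  · obtain rfl : r = 0 := by omega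
    obtain rfl : m = n := by omega
    simp only [Finset.range_zero, Finset.sum_empty, mul_zero, add_zero, pow_zero, mul_one,
      Nat.sub_zero]
    refine congrArg (· * _) (Finset.sum_congr rfl fun k _ => ?_)
    rw [show 2 * k * m = k * (m + m) by ring, sq]

lemma neg_I_mul_mul_neg_I_mul (p : ℕ) (lp lm : ℂ) :
    -Complex.I * (qh p)⁻¹ * lp * (-Complex.I * qh p * lm) = -(lp * lm) := by
  have := qh_ne_zero p
  field_simp
  linear_combination lp * lm * Complex.I_sq

lemma inv_pow_mul_pow_sq_mul {x : ℂ} (hx : x ≠ 0) {m n r : ℕ} (h : x ^ n = x ^ m * x ^ r) (k : ℕ) :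
    x⁻¹ ^ (k * (m + n)) * x ^ k ^ 2 * (x⁻¹ ^ n) ^ r =
      x⁻¹ ^ (n * (k + (k + r))) * x ^ (k * (k + r)) := by
  have e : x⁻¹ ^ (n * (k + (k + r))) = x⁻¹ ^ (k * n) * ((x ^ n)⁻¹) ^ k * (x⁻¹ ^ n) ^ r := by
    rw [← inv_pow]
    ring
  have e2 : x⁻¹ ^ (k * (m + n)) = x⁻¹ ^ (k * n) * ((x ^ m)⁻¹) ^ k := by
    rw [← inv_pow]
    ring
  have e3 : x ^ (k * (k + r)) = x ^ k ^ 2 * (x ^ r) ^ k := by ring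
  have h3 := pow_ne_zero r hx
  have h4 : ((x ^ m * x ^ r)⁻¹) ^ k * (x ^ r) ^ k = ((x ^ m)⁻¹) ^ k := by
    rw [← mul_pow, mul_inv, inv_mul_cancel_right₀ h3]
  rw [e, e2, e3, h, ← h4]
  ring

lemma pow_mul_pow_sq_mul_inv_pow {x : ℂ} (hx : x ≠ 0) {m n t : ℕ} (h : x ^ m = x ^ n * x ^ t)
    (k : ℕ) :
    x ^ (k * (m + n)) * x ^ k ^ 2 * x⁻¹ ^ (4 * n * k) * (x⁻¹ ^ n) ^ t =
      x⁻¹ ^ (n * (t + k + k)) * x ^ ((t + k) * k) := by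
  have e : x ^ (k * (m + n)) = (x ^ n) ^ (2 * k) * (x ^ t) ^ k := by
    rw [mul_comm, pow_mul, pow_add, h]
    ring
  have e2 : x⁻¹ ^ (4 * n * k) = x⁻¹ ^ (2 * n * k) * ((x ^ n)⁻¹) ^ (2 * k) := by
    rw [← inv_pow]
    ring
  have h4 : (x ^ n) ^ (2 * k) * ((x ^ n)⁻¹) ^ (2 * k) = 1 := by
    rw [← mul_pow, mul_inv_cancel₀ (pow_ne_zero n hx), one_pow]
  rw [e, e2]
  linear_combination ((x ^ t) ^ k * x ^ k ^ 2 * x⁻¹ ^ (2 * n * k) * (x⁻¹ ^ n) ^ t) * h4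

lemma q_pow_eq_mul {p a b c : ℕ} [NeZero p] (h : a + b = c ∨ a + b = c + p) :
    q p ^ c = q p ^ a * q p ^ b := by
  rw [← pow_add]
  rcases h with h | h
  · rw [h]
  · rw [h, pow_add, (isPrimitiveRoot_q p).pow_eq_one, mul_one]

lemma left_term_eq_dterm {p m n r : ℕ} [NeZero p] (lp lm : ℂ)
    (hmr : m + r = n ∨ m + r = n + p) (k : ℕ) :
    (((-(lp * lm)) ^ k * (q p)⁻¹ ^ (k * (m + n)) / (qfact p k * qfact p (k + r))) • xi p ^ k) *
        ((-Complex.I * qh p * (q p)⁻¹ ^ n * lm) • ηm p) ^ r * dl p ^ n =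
      dterm p (-Complex.I * (qh p)⁻¹ * lp) (-Complex.I * qh p * lm) n k (k + r) := by
  have key := inv_pow_mul_pow_sq_mul (q_ne_zero p) (q_pow_eq_mul hmr) k
  rw [dterm, xi_pow, smul_smul, smul_pow, smul_mul_smul_comm, smul_mul_assoc,
    mul_assoc _ _ (ηm p ^ r), ← pow_add, ← neg_I_mul_mul_neg_I_mul p,
    show -Complex.I * qh p * (q p)⁻¹ ^ n * lm = (-Complex.I * qh p * lm) * (q p)⁻¹ ^ n by ring]
  generalize -Complex.I * (qh p)⁻¹ * lp = κp
  generalize -Complex.I * qh p * lm = κm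
  refine congrArg (· • _) ?_
  rw [mul_pow, mul_pow, pow_add κm]
  linear_combination (κp ^ k * κm ^ k * κm ^ r / (qfact p k * qfact p (k + r))) * key

lemma right_term_eq_dterm {p m n t : ℕ} [NeZero p] (lp lm : ℂ)
    (hmt : n + t = m ∨ n + t = m + p) (k : ℕ) :
    ((-Complex.I * (qh p)⁻¹ * (q p)⁻¹ ^ n * lp) • ηp p) ^ t * dl p ^ n *
        (((-(lp * lm)) ^ k * q p ^ (k * (m + n)) / (qfact p k * qfact p (k + t))) • xi p ^ k) =
      dterm p (-Complex.I * (qh p)⁻¹ * lp) (-Complex.I * qh p * lm) n (t + k) k := by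
  have key := pow_mul_pow_sq_mul_inv_pow (q_ne_zero p) (q_pow_eq_mul hmt) k
  rw [dterm, mul_smul_comm, mul_assoc, dl_pow_mul_xi_pow, xi_pow, smul_pow]
  simp only [smul_mul_assoc, mul_smul_comm, smul_smul]
  rw [← mul_assoc (ηp p ^ t), ← mul_assoc (ηp p ^ t), ← pow_add, ← neg_I_mul_mul_neg_I_mul p,
    show -Complex.I * (qh p)⁻¹ * (q p)⁻¹ ^ n * lp =
      (-Complex.I * (qh p)⁻¹ * lp) * (q p)⁻¹ ^ n by ring]
  generalize -Complex.I * (qh p)⁻¹ * lp = κp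
  generalize -Complex.I * qh p * lm = κm
  refine congrArg (· • _) ?_
  rw [mul_pow, mul_pow, pow_add κp, add_comm k t]
  linear_combination (κp ^ k * κm ^ k * κp ^ t / (qfact p k * qfact p (t + k))) * key

lemma dmat_eq_sum_dterm {p : ℕ} [NeZero p] (lp lm : ℂ) (m n : ZMod p) :
    dmat p lp lm m.val n.val = ∑ s : ZMod p,
      dterm p (-Complex.I * (qh p)⁻¹ * lp) (-Complex.I * qh p * lm) n.val (m - s).val
        (n - s).val := by
  have hr := (n - m).val_lt
  have hmr : m.val + (n - m).val = n.val ∨ m.val + (n - m).val = n.val + p := by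
    have h := ZMod.val_add m (n - m)
    have hm := m.val_lt
    rw [add_sub_cancel] at h
    by_cases hlt : m.val + (n - m).val < p
    · exact Or.inl (by rw [h, Nat.mod_eq_of_lt hlt])
    · rw [Nat.mod_eq_sub_mod (by omega), Nat.mod_eq_of_lt (by omega)] at h
      omega
  rw [dmat_eq_of_shift lp lm m.val_lt n.val_lt hr hmr, Finset.sum_mul, Finset.sum_mul,
    Finset.mul_sum, ← (Equiv.subLeft m).sum_comp]
  set r := (n - m).val with hrdef
  simp only [left_term_eq_dterm lp lm hmr,
    right_term_eq_dterm lp lm (show n.val + (p - r) = m.val ∨ n.val + (p - r) = m.val + p by omega)]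
  set T := dterm p (-Complex.I * (qh p)⁻¹ * lp) (-Complex.I * qh p * lm) n.val
  have e : ∀ x : ZMod p, T (m - Equiv.subLeft m x).val (n - Equiv.subLeft m x).val =
      T x.val ((x.val + r) % p) := by
    intro x
    rw [Equiv.subLeft_apply, sub_sub_cancel, hrdef, ← ZMod.val_add]
    congr 2
    ring
  rw [Finset.sum_congr rfl fun x _ => e x,
    ← sum_range_eq_sum_zmod fun i => T i ((i + r) % p)]
  have hsplit : Finset.range p = Finset.range (p - r + r) := by rw [Nat.sub_add_cancel hr.le]
  rw [hsplit, Finset.sum_range_add]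
  refine congrArg₂ _ (Finset.sum_congr rfl fun k hk => ?_) (Finset.sum_congr rfl fun k hk => ?_)
  · have := Finset.mem_range.mp hk
    rw [Nat.mod_eq_of_lt (by omega)]
  · have := Finset.mem_range.mp hk
    rw [show p - r + k + r = k + p by omega, Nat.add_mod_right,
      Nat.mod_eq_of_lt (by omega)]

lemma stdAddChar_natCast (p k : ℕ) [NeZero p] : ZMod.stdAddChar (k : ZMod p) = q p ^ k := by
  have h := ZMod.stdAddChar_coe (N := p) k
  rw [Int.cast_natCast] at h
  rw [h, q, ← Complex.exp_nat_mul]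
  congr 1
  push_cast
  ring

lemma stdAddChar_neg_natCast (p k : ℕ) [NeZero p] :
    ZMod.stdAddChar (-(k : ZMod p)) = (q p)⁻¹ ^ k := by
  rw [AddChar.map_neg_eq_inv, stdAddChar_natCast, inv_pow]

/-- The entries of the `η₊`-factor of the matrix `(d_{mn})`. -/
def plusFactor (p : ℕ) [NeZero p] (κ : ℂ) (k s : ZMod p) : A p :=
  (κ ^ (k - s).val / qfact p (k - s).val * ZMod.stdAddChar (-((k - s) * s))) • ηp p ^ (k - s).val

/-- The entries of the `η₋`-factor of the matrix `(d_{mn})`. -/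
def minusFactor (p : ℕ) [NeZero p] (κ : ℂ) (s n : ZMod p) : A p :=
  (κ ^ (n - s).val / qfact p (n - s).val * ZMod.stdAddChar (-(n * (n - s)))) • ηm p ^ (n - s).val

lemma dmat_eq_sum_factor {p : ℕ} [NeZero p] (lp lm : ℂ) (m n : ZMod p) :
    dmat p lp lm m.val n.val = ∑ s : ZMod p, plusFactor p (-Complex.I * (qh p)⁻¹ * lp) m s *
      minusFactor p (-Complex.I * qh p * lm) s n * dl p ^ n.val := by
  rw [dmat_eq_sum_dterm]
  refine Finset.sum_congr rfl fun s _ => ?_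
  rw [plusFactor, minusFactor, dterm, smul_mul_smul_comm, smul_mul_assoc, ← stdAddChar_natCast,
    ← stdAddChar_neg_natCast]
  refine congrArg (· • _) ?_
  have h : (ZMod.stdAddChar (-((m - s) * s)) * ZMod.stdAddChar (-(n * (n - s))) : ℂ) =
      ZMod.stdAddChar (-((n.val * ((m - s).val + (n - s).val) : ℕ) : ZMod p)) *
        ZMod.stdAddChar (((m - s).val * (n - s).val : ℕ) : ZMod p) := by
    rw [← AddChar.map_add_eq_mul, ← AddChar.map_add_eq_mul]
    push_cast
    simp only [ZMod.natCast_val, ZMod.cast_id', id_eq]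
    congr 1
    ring
  linear_combination -((-Complex.I * (qh p)⁻¹ * lp) ^ (m - s).val / qfact p (m - s).val *
    ((-Complex.I * qh p * lm) ^ (n - s).val / qfact p (n - s).val)) * h

lemma conj_stdAddChar_neg {p : ℕ} [NeZero p] (x : ZMod p) :
    star (ZMod.stdAddChar (-x)) = ZMod.stdAddChar x := by
  have h := AddChar.map_neg_eq_conj (ZMod.stdAddChar (N := p)) (-x)
  rw [neg_neg] at h
  exact h.symm

section Star

variable {p : ℕ} [NeZero p] [StarRing (A p)] [StarModule ℂ (A p)]

lemma sum_star_plusFactor_mul (hp : Odd p) (h1 : star (ηp p) = ηp p) (l : ℝ) (s t : ZMod p) :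
    ∑ k, star (plusFactor p (-Complex.I * (qh p)⁻¹ * l) k s) *
      plusFactor p (-Complex.I * (qh p)⁻¹ * l) (-k) t = if s + t = 0 then 1 else 0 := by
  have hκ : star (-Complex.I * (qh p)⁻¹ * l) = -(-Complex.I * (qh p)⁻¹ * l * q p) := by
    have := qh_ne_zero p
    simp only [← starRingEnd_apply, map_mul, map_neg, map_inv₀, conj_qh, Complex.conj_I,
      Complex.conj_ofReal, ← qh_sq]
    field_simp
  set κ := -Complex.I * (qh p)⁻¹ * l
  have key := sum_zmod_qexp hp (ηp_pow p) (q_ne_zero p) (qnum_add p) hκ (-(s + t))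
  have e : ∀ j, star (plusFactor p κ (Equiv.subLeft (-t) j) s) *
      plusFactor p κ (-(Equiv.subLeft (-t) j)) t =
      ZMod.stdAddChar (s * -(s + t)) • ((star κ ^ (-(s + t) - j).val / qfact p (-(s + t) - j).val *
        (κ ^ j.val / qfact p j.val) * q p ^ (j.val * (-(s + t)).val)) •
          ηp p ^ ((-(s + t) - j).val + j.val)) := by
    intro j
    have e1 : -t - j - s = -(s + t) - j := by ring
    have e2 : -(-t - j) - t = j := by ring
    rw [Equiv.subLeft_apply, plusFactor, plusFactor, e1, e2, star_smul, star_pow, h1,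
      smul_mul_smul_comm, ← pow_add, smul_smul, star_mul', star_div₀, star_pow,
      ← starRingEnd_apply (qfact _ _), conj_qfact, conj_stdAddChar_neg, ← stdAddChar_natCast]
    refine congrArg (· • _) ?_
    have h : (ZMod.stdAddChar ((-(s + t) - j) * s) * ZMod.stdAddChar (-(j * t)) : ℂ) =
        ZMod.stdAddChar (s * -(s + t)) *
          ZMod.stdAddChar ((j.val * (-(s + t)).val : ℕ) : ZMod p) := by
      rw [← AddChar.map_add_eq_mul, ← AddChar.map_add_eq_mul]
      push_cast
      simp only [ZMod.natCast_val, ZMod.cast_id', id_eq]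
      congr 1
      ring
    linear_combination (star κ ^ (-(s + t) - j).val / qfact p (-(s + t) - j).val *
        (κ ^ j.val / qfact p j.val)) * h
  rw [← (Equiv.subLeft (-t)).sum_comp, Finset.sum_congr rfl fun j _ => e j, ← Finset.smul_sum, key]
  simp only [neg_eq_zero]
  split_ifs with h
  · rw [h, neg_zero, mul_zero, AddChar.map_zero_eq_one, one_smul]
  · rw [smul_zero]

lemma sum_star_minusFactor_mul (hp : Odd p) (h2 : star (ηm p) = ηm p) (l : ℝ) (m n : ZMod p) :
    ∑ s, star (minusFactor p (-Complex.I * qh p * l) s m) *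
      minusFactor p (-Complex.I * qh p * l) (-s) n = if m + n = 0 then 1 else 0 := by
  have hκ : star (-Complex.I * qh p * l) = -(-Complex.I * qh p * l * (q p)⁻¹) := by
    have := qh_ne_zero p
    simp only [← starRingEnd_apply, map_mul, map_neg, conj_qh, Complex.conj_I,
      Complex.conj_ofReal, ← qh_sq]
    field_simp
  set κ := -Complex.I * qh p * l
  have key := sum_zmod_qexp hp (ηm_pow p) (inv_ne_zero (q_ne_zero p))
    (by simpa using qnum_add' p) hκ (m + n)
  have e : ∀ j, star (minusFactor p κ (Equiv.subRight n j) m) *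
      minusFactor p κ (-(Equiv.subRight n j)) n =
      ZMod.stdAddChar (m * (m + n)) • ((star κ ^ (m + n - j).val / qfact p (m + n - j).val *
        (κ ^ j.val / qfact p j.val) * (q p)⁻¹ ^ (j.val * (m + n).val)) •
          ηm p ^ ((m + n - j).val + j.val)) := by
    intro j
    have e1 : m - (j - n) = m + n - j := by ring
    have e2 : n - -(j - n) = j := by ring
    rw [Equiv.subRight_apply, minusFactor, minusFactor, e1, e2, star_smul, star_pow, h2,
      smul_mul_smul_comm, ← pow_add, smul_smul, star_mul', star_div₀, star_pow,
      ← starRingEnd_apply (qfact _ _), conj_qfact, conj_stdAddChar_neg, ← stdAddChar_neg_natCast]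
    refine congrArg (· • _) ?_
    have h : (ZMod.stdAddChar (m * (m + n - j)) * ZMod.stdAddChar (-(n * j)) : ℂ) =
        ZMod.stdAddChar (m * (m + n)) *
          ZMod.stdAddChar (-((j.val * (m + n).val : ℕ) : ZMod p)) := by
      rw [← AddChar.map_add_eq_mul, ← AddChar.map_add_eq_mul]
      push_cast
      simp only [ZMod.natCast_val, ZMod.cast_id', id_eq]
      congr 1
      ring
    linear_combination (star κ ^ (m + n - j).val / qfact p (m + n - j).val *
        (κ ^ j.val / qfact p j.val)) * h
  rw [← (Equiv.subRight n).sum_comp, Finset.sum_congr rfl fun j _ => e j, ← Finset.smul_sum, key]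
  split_ifs with h
  · rw [h, mul_zero, AddChar.map_zero_eq_one, one_smul]
  · rw [smul_zero]

lemma sum_star_dmat_mul (hp : Odd p) (h1 : star (ηp p) = ηp p) (h2 : star (ηm p) = ηm p)
    (h3 : star (dl p) = dl p) (lp lm : ℝ) (m n : ZMod p) :
    ∑ k : ZMod p, star (dmat p lp lm k.val m.val) * dmat p lp lm (-k).val n.val =
      if m + n = 0 then 1 else 0 := by
  have hP := sum_star_plusFactor_mul hp h1 lp
  have hR := sum_star_minusFactor_mul hp h2 lm m n
  simp only [dmat_eq_sum_factor]
  set P := plusFactor p (-Complex.I * (qh p)⁻¹ * lp)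
  set R := minusFactor p (-Complex.I * qh p * lm)
  calc ∑ k, star (∑ s, P k s * R s m * dl p ^ m.val) * ∑ t, P (-k) t * R t n * dl p ^ n.val
      = ∑ s, ∑ t, dl p ^ m.val * star (R s m) * (∑ k, star (P k s) * P (-k) t) * R t n *
          dl p ^ n.val := by
        simp only [star_sum, Finset.sum_mul_sum]
        simp only [Finset.mul_sum, Finset.sum_mul, star_mul, star_pow, h3]
        rw [Finset.sum_comm]
        refine Finset.sum_congr rfl fun s _ => ?_
        rw [Finset.sum_comm]
        simp only [mul_assoc]
    _ = ∑ s, dl p ^ m.val * (star (R s m) * R (-s) n) * dl p ^ n.val := by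
        refine Finset.sum_congr rfl fun s _ => ?_
        rw [Finset.sum_eq_single (-s)]
        · rw [hP, if_pos (add_neg_cancel s), mul_one]
          simp only [mul_assoc]
        · intro t _ ht
          rw [hP, if_neg fun h => ht (eq_neg_of_add_eq_zero_right h)]
          simp
        · simp
    _ = if m + n = 0 then 1 else 0 := by
        rw [← Finset.sum_mul, ← Finset.mul_sum, hR]
        split_ifs with h
        · rw [mul_one, ← pow_add]
          have hdvd : p ∣ m.val + n.val := by
            rw [← ZMod.natCast_eq_zero_iff]
            simpa using h
          obtain ⟨c, hc⟩ := hdvd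
          rw [hc, pow_mul, dl_pow, one_pow]
        · simp

end Star

/-- Pseudo-unitarity of the matrix elements `D^λ_{mn}` for real `λ₊, λ₋`:
`(d_{0m})*·d_{0n} + Σ_{k=1}^{p−1} (d_{km})*·d_{p−k,n} = (δ_{m+n,0} + δ_{m+n,p})·1_A`. -/
theorem statement10 (p : ℕ) (hp : Odd p) (hp3 : 3 ≤ p) (lp lm : ℝ)
    (st : A p → A p)
    (hstAdd : ∀ x y : A p, st (x + y) = st x + st y)
    (hstSmul : ∀ (c : ℂ) (x : A p), st (c • x) = (starRingEnd ℂ) c • st x)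
    (hstMul : ∀ x y : A p, st (x * y) = st y * st x)
    (hstInv : ∀ x : A p, st (st x) = x)
    (hst1 : st (ηp p) = ηp p) (hst2 : st (ηm p) = ηm p) (hst3 : st (dl p) = dl p) :
    ∀ m n : ℕ, m < p → n < p →
      st (dmat p (lp : ℂ) (lm : ℂ) 0 m) * dmat p (lp : ℂ) (lm : ℂ) 0 n +
        ∑ k ∈ Finset.Icc 1 (p - 1),
          st (dmat p (lp : ℂ) (lm : ℂ) k m) * dmat p (lp : ℂ) (lm : ℂ) (p - k) n =
      (((if m + n = 0 then 1 else 0) + (if m + n = p then 1 else 0) : ℂ)) • (1 : A p) := by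
  intro m n hm hn
  have : NeZero p := ⟨by omega⟩
  let : StarRing (A p) :=
    { star := st, star_involutive := hstInv, star_mul := hstMul, star_add := hstAdd }
  let : StarModule ℂ (A p) := ⟨hstSmul⟩
  have key := sum_star_dmat_mul hp hst1 hst2 hst3 lp lm (m : ZMod p) (n : ZMod p)
  rw [ZMod.val_cast_of_lt hm, ZMod.val_cast_of_lt hn] at key
  have hneg : ∀ k : ZMod p, (-k).val = if k.val = 0 then 0 else p - k.val := by
    intro k
    rw [ZMod.neg_val]
    simp only [ZMod.val_eq_zero]
  simp only [hneg] at key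
  rw [← sum_range_eq_sum_zmod (p := p) fun k =>
    star (dmat p lp lm k m) * dmat p lp lm (if k = 0 then 0 else p - k) n,
    Finset.sum_range_eq_add_Ico _ (by omega)] at key
  rw [show Finset.Icc 1 (p - 1) = Finset.Ico 1 p by ext; simp; omega]
  have hrhs : ((if m + n = 0 then 1 else 0) + (if m + n = p then 1 else 0) : ℂ) • (1 : A p) =
      if (m : ZMod p) + (n : ZMod p) = 0 then 1 else 0 := by
    rw [← Nat.cast_add]
    simp only [ZMod.natCast_eq_zero_iff]
    by_cases h0 : m + n = 0
    · simp [h0, (NeZero.ne p).symm]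
    · by_cases h1 : m + n = p
      · simp [h1, NeZero.ne p]
      · have hdvd : ¬ p ∣ m + n := by
          rintro ⟨c, hc⟩
          have hc2 : c < 2 := by
            by_contra! h
            nlinarith
          interval_cases c <;> omega
        rw [if_neg h0, if_neg h1, if_neg hdvd, add_zero, zero_smul]
  rw [hrhs, ← key]
  refine congrArg₂ _ rfl (Finset.sum_congr rfl fun k hk => ?_)
  rw [if_neg (by have := Finset.mem_Ico.mp hk; omega)]
  rfl
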